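/- arXiv:1812.04086 — 3 statements merged into one kernel-verified Lean document; each statement's English description precedes it below -/
import Mathlib

section
/- Let (Ω,F,P) be a complete probability space, T > 0 finite, and Γ : Ω × [0,T] ⇒ ℝ^d an F ⊗ B([0,T])-measurable set-valued mapping. Then the mapping ⃗Γ, defined pathwise by ⃗Γ_0(ω) := {0} and ⃗Γ_t(ω) := liminf_{s↑↑t} Γ_s(ω) for t ∈ (0,T], is F ⊗ B([0,T])-measurable, i.e., {(ω,t) | ⃗Γ_t(ω) ∩ O ≠ ∅} ∈ F ⊗ B([0,T]) for every open O ⊆ ℝ^d. -/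
open MeasureTheory Filter Set Topology
open scoped ENNReal Classical

/-- Euclidean space `ℝ^d`. -/
abbrev Euc (d : ℕ) := EuclideanSpace ℝ (Fin d)

/-- A sequence in `[0,T]` increasing strictly to `t` from the left. -/
def SeqToLeft (t : ℝ) (s : ℕ → ℝ) : Prop :=
  StrictMono s ∧ (∀ n, 0 ≤ s n ∧ s n < t) ∧ Tendsto s atTop (𝓝 t)

/-- `liminf_{s↑↑t} Γ_s`: the points `x` with `dist(x,Γ_{s_n}) → 0` along every strictly
increasing sequence `s_n → t`. -/
def leftLiminfSV {d : ℕ} (Γ : ℝ → Set (Euc d)) (t : ℝ) : Set (Euc d) :=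
  {x | ∀ s : ℕ → ℝ, SeqToLeft t s →
    Tendsto (fun n => Metric.infDist x (Γ (s n))) atTop (𝓝 0)}

/-- The mapping `⃗Γ` of left limits: `⃗Γ_0 = {0}` and `⃗Γ_t = liminf_{s↑↑t} Γ_s`. -/
def vecSV {d : ℕ} (Γ : ℝ → Set (Euc d)) (t : ℝ) : Set (Euc d) :=
  if t ≤ 0 then {0} else leftLiminfSV Γ t

/-!
A point `x` belongs to the lower limit of `Γ s` as `s` increases to `t` iff `dist (x, Γ s) → 0`
along the left neighbourhoods of `t`. For a compact set `K`, the lower limit meets `K` iff for every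
`n` some point `x` of a fixed countable dense subset of `K` satisfies `dist (x, Γ s) < 1 / (n + 1)`
for all `s < t` close enough to `t`. This reduces the measurability to that of
`{(ω, t) | ∃ s ∈ (q, t), (ω, s) ∈ B}` for measurable `B`, which, after inserting a point of a
countable dense set between `s` and `t`, is a countable combination of projections to `Ω` of
measurable sets. Such projections are measurable because `Ω` is complete: `B` is pulled back from
(Cantor space) × (time), where its projection is analytic, and analytic sets are universally
measurable.
-/

section AnalyticSets

lemma exists_finset_forall_eqOn_imp_mem {ι : Type*} {Y : ι → Type*} [∀ i, TopologicalSpace (Y i)]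
    {K W : Set (∀ i, Y i)} (hK : IsCompact K) (hW : IsOpen W) (hKW : K ⊆ W) :
    ∃ J : Finset ι, ∀ y ∈ K, ∀ x, (∀ i ∈ J, x i = y i) → x ∈ W := by
  refine hK.induction_on (p := fun S => ∃ J : Finset ι, ∀ y ∈ S, ∀ x, (∀ i ∈ J, x i = y i) → x ∈ W)
    ⟨∅, fun _ hy => hy.elim⟩ ?_ ?_ ?_
  · rintro S S' hSS' ⟨J, hJ⟩
    exact ⟨J, fun y hy => hJ y (hSS' hy)⟩
  · rintro S S' ⟨J, hJ⟩ ⟨J', hJ'⟩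
    refine ⟨J ∪ J', ?_⟩
    rintro y (hy | hy) x hxy
    · exact hJ y hy x fun i hi => hxy i (Finset.mem_union_left _ hi)
    · exact hJ' y hy x fun i hi => hxy i (Finset.mem_union_right _ hi)
  · intro y hy
    obtain ⟨J, u, hu, hJW⟩ := isOpen_pi_iff.1 hW y (hKW hy)
    have hnhds : (J : Set ι).pi u ∈ 𝓝 y :=
      set_pi_mem_nhds J.finite_toSet fun i hi => (hu i hi).1.mem_nhds (hu i hi).2
    refine ⟨_, mem_nhdsWithin_of_mem_nhds hnhds, J, fun z hz x hxz => hJW fun i hi => ?_⟩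
    rw [hxz i hi]
    exact hz i hi

lemma isCompact_Iic_of_orderBot {α : Type*} [Preorder α] [OrderBot α] [TopologicalSpace α]
    [CompactIccSpace α] (a : α) : IsCompact (Iic a) :=
  Icc_bot (a := a) ▸ isCompact_Icc

lemma exists_forall_lt_le_subset_of_Iic_subset {N : ℕ → ℕ} {W : Set (ℕ → ℕ)} (hW : IsOpen W)
    (hNW : Iic N ⊆ W) : ∃ k, {x : ℕ → ℕ | ∀ i < k, x i ≤ N i} ⊆ W := by
  obtain ⟨J, hJ⟩ := exists_finset_forall_eqOn_imp_mem (isCompact_Iic_of_orderBot N) hW hNW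
  obtain ⟨k, hk⟩ := J.exists_nat_subset_range
  refine ⟨k, fun x hx => hJ (x ⊓ N) (mem_Iic.2 inf_le_right) x fun i hi => ?_⟩
  exact (min_eq_left (hx i (Finset.mem_range.1 (hk hi)))).symm

lemma exists_bounds_le_add_sum {ν : Set (ℕ → ℕ) → ℝ≥0∞} {δ : ℕ → ℝ≥0∞}
    (hν : ∀ k B, ∃ m, ν B ≤ ν (B ∩ {x | x k ≤ m}) + δ k) :
    ∃ N : ℕ → ℕ, ∀ k, ν univ ≤ ν {x | ∀ i < k, x i ≤ N i} + ∑ i ∈ Finset.range k, δ i := by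
  choose m hm using hν
  let B : ℕ → Set (ℕ → ℕ) := Nat.rec univ fun k B => B ∩ {x | x k ≤ m k B}
  have hB : ∀ k, B k = {x | ∀ i < k, x i ≤ m i (B i)} := by
    intro k
    induction k with
    | zero => simp [B]
    | succ k ih =>
      calc B (k + 1) = {x | ∀ i < k, x i ≤ m i (B i)} ∩ {x | x k ≤ m k (B k)} :=
            congrArg (· ∩ {x | x k ≤ m k (B k)}) ih
        _ = {x | ∀ i < k + 1, x i ≤ m i (B i)} := by
          ext x; simp only [Nat.forall_lt_succ_right, mem_inter_iff, mem_ofPred_eq]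
  refine ⟨fun i => m i (B i), fun k => ?_⟩
  rw [← hB k]
  induction k with
  | zero => simp [B]
  | succ k ih =>
    calc ν univ ≤ ν (B k) + ∑ i ∈ Finset.range k, δ i := ih
      _ ≤ ν (B (k + 1)) + δ k + ∑ i ∈ Finset.range k, δ i := by gcongr; exact hm k (B k)
      _ = ν (B (k + 1)) + ∑ i ∈ Finset.range (k + 1), δ i := by
        rw [Finset.sum_range_succ, add_assoc, add_comm (δ k)]

variable {X : Type*} [MeasurableSpace X] {μ : Measure X}

lemma exists_measure_image_le_add {α : Type*} {f : α → X} {B : Set α} (hB : μ (f '' B) ≠ ∞)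
    (c : α → ℕ) {δ : ℝ≥0∞} (hδ : δ ≠ 0) :
    ∃ m, μ (f '' B) ≤ μ (f '' (B ∩ {x | c x ≤ m})) + δ := by
  have hmono : Monotone fun m : ℕ => f '' (B ∩ {x | c x ≤ m}) := fun a b hab =>
    image_mono (inter_subset_inter_right _ fun x (hx : c x ≤ a) => hx.trans hab)
  have hiUnion : ⋃ m : ℕ, f '' (B ∩ {x | c x ≤ m}) = f '' B := by
    rw [← image_iUnion, ← inter_iUnion, iUnion_eq_univ_iff.2 fun x => ⟨c x, le_refl (c x)⟩,
      inter_univ]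
  rcases eq_or_ne (μ (f '' B)) 0 with hzero | hpos
  · exact ⟨0, by simp [hzero]⟩
  have hlim := tendsto_measure_iUnion_atTop (μ := μ) hmono
  rw [hiUnion] at hlim
  obtain ⟨m, hm⟩ := (hlim.eventually (lt_mem_nhds (ENNReal.sub_lt_self hB hpos hδ))).exists
  exact ⟨m, tsub_le_iff_right.1 hm.le⟩

lemma exists_isCompact_subset_range_measure_le_add [TopologicalSpace X] [μ.OuterRegular]
    {f : (ℕ → ℕ) → X} (hf : Continuous f) (hμf : μ (range f) ≠ ∞) {ε : ℝ≥0∞} (hε : ε ≠ 0) :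
    ∃ K ⊆ range f, IsCompact K ∧ μ (range f) ≤ μ K + ε := by
  obtain ⟨δ, hδ, hsum⟩ := ENNReal.exists_pos_sum_of_countable' hε ℕ
  obtain ⟨N, hN⟩ := exists_bounds_le_add_sum (ν := fun B => μ (f '' B)) fun k B =>
    exists_measure_image_le_add (measure_ne_top_of_subset (image_subset_range f B) hμf) (· k)
      (hδ k).ne'
  refine ⟨f '' Iic N, image_subset_range f _, (isCompact_Iic_of_orderBot N).image hf, ?_⟩
  rw [← tsub_le_iff_right, (f '' Iic N).measure_eq_iInf_isOpen μ]
  refine le_iInf₂ fun U hU => le_iInf fun hUo => tsub_le_iff_right.2 ?_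
  obtain ⟨k, hk⟩ :=
    exists_forall_lt_le_subset_of_Iic_subset (hUo.preimage hf) (image_subset_iff.1 hU)
  calc μ (range f) = μ (f '' univ) := by rw [image_univ]
    _ ≤ μ (f '' {x | ∀ i < k, x i ≤ N i}) + ∑ i ∈ Finset.range k, δ i := hN k
    _ ≤ μ U + ε := by
      gcongr
      · exact image_subset_iff.2 hk
      · exact (ENNReal.sum_le_tsum _).trans hsum.le

lemma nullMeasurableSet_of_forall_exists_measure_le_add {S : Set X} (hS : μ S ≠ ∞)
    (h : ∀ ε ≠ 0, ∃ F ⊆ S, MeasurableSet F ∧ μ S ≤ μ F + ε) : NullMeasurableSet S μ := by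
  choose! F hFS hFm hF using h
  have hinv (n : ℕ) : (n : ℝ≥0∞)⁻¹ ≠ 0 := ENNReal.inv_ne_zero.2 (ENNReal.natCast_ne_top n)
  let U := ⋃ n : ℕ, F (n : ℝ≥0∞)⁻¹
  have hUS : U ⊆ S := iUnion_subset fun n => hFS _ (hinv n)
  have hUm : NullMeasurableSet U μ :=
    (MeasurableSet.iUnion fun n => hFm _ (hinv n)).nullMeasurableSet
  have hSU (n : ℕ) : μ S ≤ μ U + (n : ℝ≥0∞)⁻¹ := (hF _ (hinv n)).trans <| by
    gcongr
    exact subset_iUnion (fun n : ℕ => F (n : ℝ≥0∞)⁻¹) n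
  have hlim : Tendsto (fun n : ℕ => μ U + (n : ℝ≥0∞)⁻¹) atTop (𝓝 (μ U)) := by
    simpa only [add_zero] using tendsto_const_nhds.add ENNReal.tendsto_inv_nat_nhds_zero
  exact hUm.congr (ae_eq_of_subset_of_measure_ge hUS (ge_of_tendsto' hlim hSU) hUm hS)

theorem nullMeasurableSet_of_analyticSet [TopologicalSpace X] [TopologicalSpace.MetrizableSpace X]
    [BorelSpace X] [SFinite μ] {S : Set X} (hS : AnalyticSet S) : NullMeasurableSet S μ := by
  rw [AnalyticSet] at hS
  rcases hS with rfl | ⟨f, hf, rfl⟩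
  · exact MeasurableSet.empty.nullMeasurableSet
  refine NullMeasurableSet.mono_ac ?_ (absolutelyContinuous_toFinite μ)
  refine nullMeasurableSet_of_forall_exists_measure_le_add (measure_ne_top _ _) fun ε hε => ?_
  obtain ⟨K, hKf, hK, hμK⟩ :=
    exists_isCompact_subset_range_measure_le_add hf (measure_ne_top μ.toFinite _) hε
  exact ⟨K, hKf, hK.measurableSet, hμK⟩

end AnalyticSets

section Projection

variable {Ω Y : Type*} [MeasurableSpace Ω] [MeasurableSpace Y]

/-- A measurable set in a product involves only countably many measurable sets of the first factor;
`φ` lists their indicators. -/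
lemma exists_measurable_eq_preimage_prodMap {E : Set (Ω × Y)} (hE : MeasurableSet E) :
    ∃ φ : Ω → ℕ → Bool, Measurable φ ∧
      ∃ E' : Set ((ℕ → Bool) × Y), MeasurableSet E' ∧ E = Prod.map φ id ⁻¹' E' := by
  have hE_gen := hE
  rw [← generateFrom_prod] at hE_gen
  induction E, hE_gen using MeasurableSpace.generateFrom_induction with
  | hC _ hrect _ =>
    obtain ⟨A, hA, B, hB, rfl⟩ := hrect
    refine ⟨fun ω _ => decide (ω ∈ A), measurable_pi_iff.2 fun _ => measurable_to_bool ?_,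
      {c | c 0 = true} ×ˢ B, ?_, ?_⟩
    · simpa only [preimage, mem_singleton_iff, decide_eq_true_eq, ofPred_mem_eq, mem_ofPred_eq]
        using hA
    · exact (measurable_pi_apply (X := fun _ : ℕ => Bool) 0 (measurableSet_singleton true)).prod hB
    · ext; simp
  | empty => exact ⟨fun _ _ => true, measurable_const, ∅, MeasurableSet.empty, rfl⟩
  | compl E hE_gen ih =>
    obtain ⟨φ, hφ, E', hE', rfl⟩ := ih (generateFrom_prod (α := Ω) (β := Y) ▸ hE_gen)
    exact ⟨φ, hφ, E'ᶜ, hE'.compl, rfl⟩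
  | iUnion E hE_gen ih =>
    choose φ hφ E' hE' hEE' using fun k => ih k (generateFrom_prod (α := Ω) (β := Y) ▸ hE_gen k)
    let coord (k : ℕ) (c : ℕ → Bool) (m : ℕ) : Bool := c (Nat.pair k m)
    have hcoord (k : ℕ) : Measurable (coord k) := measurable_pi_iff.2 fun _ => measurable_pi_apply _
    refine ⟨fun ω n => φ n.unpair.1 ω n.unpair.2,
      measurable_pi_iff.2 fun n => (measurable_pi_apply _).comp (hφ _),
      ⋃ k, Prod.map (coord k) id ⁻¹' E' k,
      MeasurableSet.iUnion fun k => (hcoord k).prodMap measurable_id (hE' k), ?_⟩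
    rw [preimage_iUnion]
    refine iUnion_congr fun k => ?_
    rw [hEE' k]
    ext ⟨ω, y⟩
    simp [coord]

variable [StandardBorelSpace Y]

theorem nullMeasurableSet_image_fst (P : Measure Ω) [SFinite P] {E : Set (Ω × Y)}
    (hE : MeasurableSet E) : NullMeasurableSet (Prod.fst '' E) P := by
  obtain ⟨φ, hφ, E', hE', rfl⟩ := exists_measurable_eq_preimage_prodMap hE
  have himage : Prod.fst '' (Prod.map φ id ⁻¹' E') = φ ⁻¹' (Prod.fst '' E') := by ext; simp
  rw [himage]
  have hanalytic : AnalyticSet (Prod.fst '' E') := hE'.analyticSet_image measurable_fst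
  exact (nullMeasurableSet_of_analyticSet hanalytic).preimage (hφ.quasiMeasurePreserving P)

theorem measurableSet_image_fst_of_isComplete (P : Measure Ω) [SFinite P] [P.IsComplete]
    {E : Set (Ω × Y)} (hE : MeasurableSet E) : MeasurableSet (Prod.fst '' E) :=
  (nullMeasurableSet_image_fst P hE).measurable_of_complete

end Projection

section LeftNeighbourhoods

variable {Ω I : Type*} [MeasurableSpace Ω] [LinearOrder I] [DenselyOrdered I] [TopologicalSpace I]
  [OrderTopology I] [TopologicalSpace.SeparableSpace I] [MeasurableSpace I]
  [OpensMeasurableSpace I] [StandardBorelSpace I]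

lemma measurableSet_exists_mem_Ioo (P : Measure Ω) [SFinite P] [P.IsComplete] {B : Set (Ω × I)}
    (hB : MeasurableSet B) (a : I) :
    MeasurableSet {p : Ω × I | ∃ s ∈ Ioo a p.2, (p.1, s) ∈ B} := by
  obtain ⟨D, hDc, hD⟩ := TopologicalSpace.exists_countable_dense I
  have hunion : {p : Ω × I | ∃ s ∈ Ioo a p.2, (p.1, s) ∈ B} =
      ⋃ r ∈ D, (Prod.fst '' (B ∩ Prod.snd ⁻¹' Ioo a r)) ×ˢ Ioi r := by
    ext ⟨ω, t⟩
    simp only [mem_iUnion, mem_prod, mem_image, exists_prop, Prod.exists, exists_and_right,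
      exists_eq_right]
    constructor
    · rintro ⟨s, ⟨has, hst⟩, hs⟩
      obtain ⟨r, hr, hsr, hrt⟩ := hD.exists_between hst
      exact ⟨r, hr, ⟨s, hs, has, hsr⟩, hrt⟩
    · rintro ⟨r, -, ⟨s, hs, has, hsr⟩, hrt⟩
      exact ⟨s, ⟨has, hsr.trans hrt⟩, hs⟩
  rw [hunion]
  exact MeasurableSet.biUnion hDc fun r _ =>
    (measurableSet_image_fst_of_isComplete P (hB.inter (measurable_snd measurableSet_Ioo))).prod
      measurableSet_Ioi

lemma measurableSet_eventually_nhdsLT_mem [NoMinOrder I] (P : Measure Ω) [SFinite P] [P.IsComplete]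
    {G : Set (Ω × I)} (hG : MeasurableSet G) :
    MeasurableSet {p : Ω × I | ∀ᶠ s in 𝓝[<] p.2, (p.1, s) ∈ G} := by
  obtain ⟨D, hDc, hD⟩ := TopologicalSpace.exists_countable_dense I
  have hunion : {p : Ω × I | ∀ᶠ s in 𝓝[<] p.2, (p.1, s) ∈ G} =
      ⋃ q ∈ D, Prod.snd ⁻¹' Ioi q \ {p : Ω × I | ∃ s ∈ Ioo q p.2, (p.1, s) ∈ Gᶜ} := by
    ext ⟨ω, t⟩
    simp only [mem_ofPred_eq, (nhdsLT_basis t).eventually_iff, mem_iUnion, exists_prop,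
      Set.mem_sdiff, mem_preimage, mem_Ioi, mem_compl_iff, not_exists, not_and, not_not]
    constructor
    · rintro ⟨a, hat, ha⟩
      obtain ⟨q, hq, haq, hqt⟩ := hD.exists_between hat
      exact ⟨q, hq, hqt, fun s hs => ha (Ioo_subset_Ioo_left haq.le hs)⟩
    · rintro ⟨q, -, hqt, hq⟩
      exact ⟨q, hqt, hq⟩
  rw [hunion]
  exact MeasurableSet.biUnion hDc fun q _ =>
    (measurable_snd measurableSet_Ioi).diff (measurableSet_exists_mem_Ioo P hG.compl q)

end LeftNeighbourhoods

section LowerLimit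

variable {ι X : Type*} [PseudoMetricSpace X] {l : Filter ι}

/-- The lower (Painlevé–Kuratowski) limit of the sets `Γ s` along the filter `l`. As
`Metric.infDist x ∅ = 0`, empty values of `Γ` impose no condition. -/
def lowerLimit (l : Filter ι) (Γ : ι → Set X) : Set X :=
  {x | Tendsto (fun s => Metric.infDist x (Γ s)) l (𝓝 0)}

lemma lowerLimit_congr {Γ Δ : ι → Set X} (h : Γ =ᶠ[l] Δ) : lowerLimit l Γ = lowerLimit l Δ :=
  Set.ext fun x => tendsto_congr' (h.fun_comp (Metric.infDist x))

lemma mem_lowerLimit_iff {Γ : ι → Set X} {x : X} :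
    x ∈ lowerLimit l Γ ↔ ∀ ε > 0, ∀ᶠ s in l, Metric.infDist x (Γ s) < ε := by
  simp only [lowerLimit, mem_ofPred_eq, Metric.tendsto_nhds, Real.dist_eq, sub_zero,
    abs_of_nonneg Metric.infDist_nonneg]

lemma lowerLimit_inter_nonempty_iff (Γ : ι → Set X) {K D : Set X} (hK : IsCompact K) (hDK : D ⊆ K)
    (hKD : K ⊆ closure D) :
    (lowerLimit l Γ ∩ K).Nonempty ↔
      ∀ n : ℕ, ∃ x ∈ D, ∀ᶠ s in l, Metric.infDist x (Γ s) < 1 / ((n : ℝ) + 1) := by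
  constructor
  · rintro ⟨x, hx, hxK⟩ n
    have hpos : (0 : ℝ) < 1 / ((n : ℝ) + 1) := Nat.one_div_pos_of_nat
    obtain ⟨y, hy, hxy⟩ := Metric.mem_closure_iff.1 (hKD hxK) _ (half_pos hpos)
    refine ⟨y, hy, (mem_lowerLimit_iff.1 hx _ (half_pos hpos)).mono fun s hs => ?_⟩
    linarith [Metric.infDist_le_infDist_add_dist (s := Γ s) (x := y) (y := x), dist_comm x y]
  · intro h
    choose x hxD hx using h
    obtain ⟨y, hyK, θ, hθ, hlim⟩ := hK.tendsto_subseq fun n => hDK (hxD n)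
    refine ⟨y, mem_lowerLimit_iff.2 fun ε hε => ?_, hyK⟩
    have hdist : ∀ᶠ n in atTop, dist (x (θ n)) y < ε / 2 :=
      Metric.tendsto_nhds.1 hlim _ (half_pos hε)
    have hsmall : ∀ᶠ n in atTop, 1 / ((θ n : ℝ) + 1) < ε / 2 :=
      (tendsto_one_div_add_atTop_nhds_zero_nat.comp hθ.tendsto_atTop).eventually
        (gt_mem_nhds (half_pos hε))
    obtain ⟨n, hn_dist, hn_small⟩ := (hdist.and hsmall).exists
    filter_upwards [hx (θ n)] with s hs
    linarith [Metric.infDist_le_infDist_add_dist (s := Γ s) (x := y) (y := x (θ n)),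
      dist_comm y (x (θ n))]

end LowerLimit

section WeakMeasurability

/-- Weak measurability of the set-valued mapping `Γ`: the points where `Γ` hits a given open set
form a measurable set. -/
def IsWeaklyMeasurable {α X : Type*} [MeasurableSpace α] [TopologicalSpace X] (Γ : α → Set X) :
    Prop :=
  ∀ O : Set X, IsOpen O → MeasurableSet {a | (Γ a ∩ O).Nonempty}

variable {α X : Type*} [MeasurableSpace α]

lemma IsWeaklyMeasurable.measurable_infDist [PseudoMetricSpace X] {Γ : α → Set X}
    (hΓ : IsWeaklyMeasurable Γ) (x : X) : Measurable fun a => Metric.infDist x (Γ a) := by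
  refine measurable_of_Iio fun ε => ?_
  rcases le_or_gt ε 0 with hε | hε
  · convert MeasurableSet.empty
    exact eq_empty_of_forall_notMem fun a ha => (hε.trans Metric.infDist_nonneg).not_gt ha
  have hunion : (fun a => Metric.infDist x (Γ a)) ⁻¹' Iio ε =
      {a | (Γ a ∩ Metric.ball x ε).Nonempty} ∪ {a | (Γ a ∩ univ).Nonempty}ᶜ := by
    ext a
    simp only [mem_preimage, mem_Iio, mem_union, mem_ofPred_eq, mem_compl_iff, inter_univ]
    rcases (Γ a).eq_empty_or_nonempty with hempty | hne
    · simp [hempty, hε]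
    · rw [Metric.infDist_lt_iff hne, or_iff_left (not_not_intro hne)]
      simp only [Set.Nonempty, mem_inter_iff, Metric.mem_ball, dist_comm]
  rw [hunion]
  exact (hΓ _ Metric.isOpen_ball).union (hΓ _ isOpen_univ).compl

lemma isSigmaCompact_of_isOpen [PseudoEMetricSpace X] [SigmaCompactSpace X] {O : Set X}
    (hO : IsOpen O) : IsSigmaCompact O := by
  obtain ⟨F, hF, -, rfl, -⟩ := hO.exists_iUnion_isClosed
  exact isSigmaCompact_iUnion F fun n =>
    isSigmaCompact_univ.of_isClosed_subset (hF n) (subset_univ _)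

lemma isWeaklyMeasurable_of_isCompact [PseudoEMetricSpace X] [SigmaCompactSpace X]
    {Γ : α → Set X} (h : ∀ K : Set X, IsCompact K → MeasurableSet {a | (Γ a ∩ K).Nonempty}) :
    IsWeaklyMeasurable Γ := by
  intro O hO
  obtain ⟨K, hK, rfl⟩ := isSigmaCompact_of_isOpen hO
  simp only [inter_iUnion, nonempty_iUnion, ofPred_exists]
  exact MeasurableSet.iUnion fun n => h _ (hK n)

end WeakMeasurability

section LeftLimits

variable {Ω I X : Type*} [MeasurableSpace Ω] [LinearOrder I] [DenselyOrdered I] [NoMinOrder I]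
  [TopologicalSpace I] [OrderTopology I] [TopologicalSpace.SeparableSpace I] [MeasurableSpace I]
  [OpensMeasurableSpace I] [StandardBorelSpace I] [PseudoMetricSpace X] [SigmaCompactSpace X]

theorem IsWeaklyMeasurable.lowerLimit_nhdsLT (P : Measure Ω) [SFinite P] [P.IsComplete]
    {Γ : Ω × I → Set X} (hΓ : IsWeaklyMeasurable Γ) :
    IsWeaklyMeasurable fun p : Ω × I => lowerLimit (𝓝[<] p.2) fun s => Γ (p.1, s) := by
  refine isWeaklyMeasurable_of_isCompact fun K hK => ?_
  obtain ⟨D, hDK, hDc, hKD⟩ := hK.isSeparable.exists_countable_dense_subset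
  simp only [lowerLimit_inter_nonempty_iff _ hK hDK hKD, ofPred_forall, ← exists_prop,
    ofPred_exists]
  exact MeasurableSet.iInter fun n => MeasurableSet.biUnion hDc fun x _ =>
    measurableSet_eventually_nhdsLT_mem P
      (measurableSet_lt (hΓ.measurable_infDist x) measurable_const)

/-- The mapping of left lower limits of `Γ` on a time axis starting at `a`, with prescribed initial
value `A`. -/
def leftLimitMap {I X : Type*} [LinearOrder I] [TopologicalSpace I] [PseudoMetricSpace X] (a : I)
    (A : Set X) (Γ : I → Set X) (t : I) : Set X :=
  if t ≤ a then A else lowerLimit (𝓝[<] t) Γ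

theorem statement13_general (P : Measure Ω) [SFinite P] [P.IsComplete] (a b : I) (A : Set X)
    (Γ : Ω → I → Set X)
    (hΓ : ∀ O : Set X, IsOpen O →
      MeasurableSet {p : Ω × I | p.2 ∈ Icc a b ∧ (Γ p.1 p.2 ∩ O).Nonempty})
    (O : Set X) (hO : IsOpen O) :
    MeasurableSet {p : Ω × I | p.2 ∈ Icc a b ∧ (leftLimitMap a A (Γ p.1) p.2 ∩ O).Nonempty} := by
  let Δ (p : Ω × I) : Set X := {x | p.2 ∈ Icc a b ∧ x ∈ Γ p.1 p.2}
  have hΔ : IsWeaklyMeasurable Δ := fun O hO => by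
    simpa only [Δ, Set.Nonempty, mem_inter_iff, mem_ofPred_eq, and_assoc, exists_and_left]
      using hΓ O hO
  have hlim (ω : Ω) (t : I) (ht : t ∈ Ioc a b) :
      lowerLimit (𝓝[<] t) (Γ ω) = lowerLimit (𝓝[<] t) fun s => Δ (ω, s) := by
    refine lowerLimit_congr ?_
    filter_upwards [Ioo_mem_nhdsLT ht.1] with s hs
    simp only [Δ, Icc, mem_ofPred_eq, hs.1.le, hs.2.le.trans ht.2, true_and, ofPred_mem_eq]
  have hunion : {p : Ω × I | p.2 ∈ Icc a b ∧ (leftLimitMap a A (Γ p.1) p.2 ∩ O).Nonempty} =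
      Prod.snd ⁻¹' {t | t ∈ Icc a b ∩ Iic a ∧ (A ∩ O).Nonempty} ∪ Prod.snd ⁻¹' Ioc a b ∩
        {p : Ω × I | (lowerLimit (𝓝[<] p.2) (fun s => Δ (p.1, s)) ∩ O).Nonempty} := by
    ext ⟨ω, t⟩
    rcases le_or_gt t a with hta | hat
    · simp [leftLimitMap, hta, hta.not_gt]
    · by_cases htb : t ≤ b
      · simp [leftLimitMap, hat, hat.le, hat.not_ge, htb, hlim ω t ⟨hat, htb⟩]
      · simp [htb]
  rw [hunion]
  refine (measurable_snd ?_).union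
    ((measurable_snd measurableSet_Ioc).inter (hΔ.lowerLimit_nhdsLT P O hO))
  exact (measurableSet_Icc.inter measurableSet_Iic).inter (.const _)

end LeftLimits

section SequentialLimits

lemma exists_strictMono_comp_of_tendsto_nhdsLT {I : Type*} [LinearOrder I] [TopologicalSpace I]
    [OrderClosedTopology I] {t : I} {u : ℕ → I} (hu : Tendsto u atTop (𝓝[<] t)) :
    ∃ φ : ℕ → ℕ, StrictMono φ ∧ StrictMono (u ∘ φ) := by
  obtain ⟨φ, hincr | hnonincr⟩ := exists_increasing_or_nonincreasing_subseq (· < ·) u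
  · exact ⟨φ, φ.strictMono, fun m n => hincr m n⟩
  obtain ⟨hlim, hlt⟩ := tendsto_nhdsWithin_iff.1 (hu.comp φ.strictMono.tendsto_atTop)
  obtain ⟨N, hN⟩ := hlt.exists
  have hle : ∀ᶠ n in atTop, u (φ n) ≤ u (φ N) :=
    (eventually_gt_atTop N).mono fun n hn => not_lt.1 (hnonincr N n hn)
  exact absurd (le_of_tendsto hlim hle) (not_le.2 hN)

lemma tendsto_nhdsLT_iff_forall_seqToLeft {β : Type*} {t : ℝ} (ht : 0 < t) {g : ℝ → β}
    {l : Filter β} :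
    Tendsto g (𝓝[<] t) l ↔ ∀ s, SeqToLeft t s → Tendsto (fun n => g (s n)) atTop l := by
  constructor
  · rintro hg s ⟨-, hs, hlim⟩
    exact hg.comp (tendsto_nhdsWithin_iff.2 ⟨hlim, Eventually.of_forall fun n => (hs n).2⟩)
  · refine fun h => tendsto_of_subseq_tendsto fun u hu => ?_
    obtain ⟨φ, hφ, huφ⟩ := exists_strictMono_comp_of_tendsto_nhdsLT hu
    have hlim := hu.comp hφ.tendsto_atTop
    obtain ⟨N, hN⟩ := eventually_atTop.1 (hlim.eventually (Ioo_mem_nhdsLT ht))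
    refine ⟨fun n => φ (n + N), h _ ⟨huφ.comp (strictMono_id.add_const N), fun n => ?_, ?_⟩⟩
    · exact ⟨(hN (n + N) (Nat.le_add_left N n)).1.le, (hN (n + N) (Nat.le_add_left N n)).2⟩
    · exact (tendsto_nhds_of_tendsto_nhdsWithin hlim).comp (tendsto_add_atTop_nat N)

lemma vecSV_eq_leftLimitMap {d : ℕ} (Γ : ℝ → Set (Euc d)) : vecSV Γ = leftLimitMap 0 {0} Γ := by
  ext t x
  rcases le_or_gt t 0 with ht | ht
  · simp only [vecSV, leftLimitMap, ht, if_true]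
  · simp only [vecSV, leftLimitMap, ht.not_ge, if_false, leftLiminfSV, lowerLimit, mem_ofPred_eq,
      tendsto_nhdsLT_iff_forall_seqToLeft ht]

end SequentialLimits

/-- **Measurability of the left-limit mapping** (Lemma 7.5, first part): if
`Γ : Ω × [0,T] ⇒ ℝ^d` is `F ⊗ B([0,T])`-measurable on a complete probability space,
then so is `⃗Γ`. -/
theorem statement13 {Ω : Type*} [mΩ : MeasurableSpace Ω] {d : ℕ} (T : ℝ) (hT : 0 < T)
    (P : Measure Ω) [IsProbabilityMeasure P] (hP : P.IsComplete)
    (Γ : Ω → ℝ → Set (Euc d))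
    (hmeas : ∀ O : Set (Euc d), IsOpen O →
      MeasurableSet {p : Ω × ℝ | p.2 ∈ Set.Icc (0:ℝ) T ∧ (Γ p.1 p.2 ∩ O).Nonempty}) :
    ∀ O : Set (Euc d), IsOpen O →
      MeasurableSet {p : Ω × ℝ | p.2 ∈ Set.Icc (0:ℝ) T ∧
        (vecSV (Γ p.1) p.2 ∩ O).Nonempty} := by
  simpa only [vecSV_eq_leftLimitMap] using statement13_general P 0 T {0} Γ hmeas
end

section
/- Let T > 0 be finite and b : [0,T] → ℝ right-upper semicontinuous (for every t ∈ [0,T), limsup_{s↓↓t} b_s ≤ b_t) and dominated by some càdlàg function y̌ (b_t ≤ y̌_t for all t). Let S_t := {y ∈ ℝ | y ≥ b_t} and D(S) := {y ∈ D | y_t ≥ b_t for all t}. Then for every t ∈ (0,T], cl{y_{t-} | y ∈ D(S)} = {x ∈ ℝ | x ≥ ⃗b_t}, where ⃗b_t := limsup_{s↑↑t} b_s (and the right-hand side is all of ℝ if ⃗b_t = −∞). -/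
/-!
Passing to the limit in `b ≤ y` shows that the left limit at `t` of every càdlàg selection `y` is at
least `⃗b_t`. Conversely, if `x > ⃗b_t`, then `b < x` on some interval `[d, t)`, so overwriting a
given selection by the constant `x` on `[d, t)` yields a selection with left limit exactly `x`. The
left limits therefore lie between the strict and the non-strict upper set of `⃗b_t`, whose closures
agree.
-/

open MeasureTheory Filter Set Topology
open scoped ENNReal Classical

/-- A function `[0,T] → ℝ` (modelled on `ℝ`) is càdlàg: right-continuous on `[0,T)` with
left limits on `(0,T]`. -/
def IsCadlagOnR (T : ℝ) (y : ℝ → ℝ) : Prop :=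
  (∀ t ∈ Set.Ico (0:ℝ) T, Tendsto y (𝓝[>] t) (𝓝 (y t))) ∧
  (∀ t ∈ Set.Ioc (0:ℝ) T, ∃ l, Tendsto y (𝓝[<] t) (𝓝 l))

/-- The left upper semicontinuous regularization `⃗b_t = limsup_{s↑↑t} b_s`, as an
extended real. -/
noncomputable def lregE (b : ℝ → ℝ) (t : ℝ) : EReal :=
  Filter.limsup (fun s => (b s : EReal)) (𝓝[<] t)

/-- The set `D(S)` of càdlàg selections of the epigraphical constraint `S_t = {y | b t ≤ y}`. Values
outside `[0,T]` are unconstrained, as in `IsCadlagOnR`. -/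
def cadlagSelections (T : ℝ) (b : ℝ → ℝ) : Set (ℝ → ℝ) :=
  {y | IsCadlagOnR T y ∧ ∀ r ∈ Icc (0 : ℝ) T, b r ≤ y r}

variable {T t : ℝ} {b f g y : ℝ → ℝ}

namespace IsCadlagOnR

lemma const (T x : ℝ) : IsCadlagOnR T fun _ => x :=
  ⟨fun _ _ => tendsto_const_nhds, fun _ _ => ⟨x, tendsto_const_nhds⟩⟩

lemma tendsto_leftLim (hy : IsCadlagOnR T y) (ht : t ∈ Ioc 0 T) :
    Tendsto y (𝓝[<] t) (𝓝 (Function.leftLim y t)) :=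
  tendsto_leftLim_of_tendsto (hy.2 t ht)

lemma piecewise_Iio (hf : IsCadlagOnR T f) (hg : IsCadlagOnR T g) (c : ℝ) :
    IsCadlagOnR T ((Iio c).piecewise f g) := by
  have eventuallyEq_left {l : Filter ℝ} (h : Iio c ∈ l) : f =ᶠ[l] (Iio c).piecewise f g :=
    ((Iio c).piecewise_eqOn f g).symm.eventuallyEq_of_mem h
  have eventuallyEq_right {l : Filter ℝ} (h : Ici c ∈ l) : g =ᶠ[l] (Iio c).piecewise f g :=
    ((Iio c).piecewise_eqOn_compl f g).symm.eventuallyEq_of_mem (by rwa [compl_Iio])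
  constructor
  · intro r hr
    rcases lt_or_ge r c with hrc | hcr
    · rw [(Iio c).piecewise_eq_of_mem f g hrc]
      exact (hf.1 r hr).congr' (eventuallyEq_left (mem_nhdsWithin_of_mem_nhds (Iio_mem_nhds hrc)))
    · rw [(Iio c).piecewise_eq_of_notMem f g hcr.not_gt]
      exact (hg.1 r hr).congr'
        (eventuallyEq_right (mem_of_superset self_mem_nhdsWithin (Ioi_subset_Ici hcr)))
  · intro r hr
    rcases le_or_gt r c with hrc | hcr
    · obtain ⟨l, hl⟩ := hf.2 r hr
      exact ⟨l, hl.congr'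
        (eventuallyEq_left (mem_of_superset self_mem_nhdsWithin (Iio_subset_Iio hrc)))⟩
    · obtain ⟨l, hl⟩ := hg.2 r hr
      exact ⟨l, hl.congr' (eventuallyEq_right (mem_nhdsWithin_of_mem_nhds (Ici_mem_nhds hcr)))⟩

end IsCadlagOnR

lemma lregE_mono (h : b ≤ᶠ[𝓝[<] t] y) : lregE b t ≤ lregE y t :=
  limsup_le_limsup (h.mono fun _ => EReal.coe_le_coe)

lemma lregE_eq_of_tendsto {l : ℝ} (h : Tendsto y (𝓝[<] t) (𝓝 l)) : lregE y t = l :=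
  ((continuous_coe_real_ereal.tendsto l).comp h).limsup_eq

lemma eventually_lt_of_lregE_lt {x : ℝ} (h : lregE b t < x) : ∀ᶠ s in 𝓝[<] t, b s < x :=
  (eventually_lt_of_limsup_lt h).mono fun _ => EReal.coe_lt_coe_iff.1

lemma lregE_le_leftLim (hy : y ∈ cadlagSelections T b) (ht : t ∈ Ioc 0 T) :
    lregE b t ≤ (Function.leftLim y t : ℝ) := by
  have hby : b ≤ᶠ[𝓝[<] t] y := by
    filter_upwards [Ioo_mem_nhdsLT ht.1] with s hs
    exact hy.2 s ⟨hs.1.le, hs.2.le.trans ht.2⟩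
  exact (lregE_mono hby).trans_eq (lregE_eq_of_tendsto (hy.1.tendsto_leftLim ht))

lemma exists_cadlagSelection_leftLim_eq {x : ℝ} (hne : (cadlagSelections T b).Nonempty)
    (hx : lregE b t < x) : ∃ z ∈ cadlagSelections T b, Function.leftLim z t = x := by
  obtain ⟨y, hy, hby⟩ := hne
  obtain ⟨d, hdt, hbx⟩ := mem_nhdsLT_iff_exists_Ico_subset.1 (eventually_lt_of_lregE_lt hx)
  let z := (Iio d).piecewise y ((Iio t).piecewise (fun _ => x) y)
  have hbz : ∀ r ∈ Icc 0 T, b r ≤ z r := by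
    intro r hr
    by_cases hrd : r < d
    · simpa [z, hrd] using hby r hr
    by_cases hrt : r < t
    · simpa [z, hrd, hrt] using (hbx ⟨not_lt.1 hrd, hrt⟩ : b r < x).le
    · simpa [z, hrd, hrt] using hby r hr
  have hzx : z =ᶠ[𝓝[<] t] fun _ => x := by
    filter_upwards [Ico_mem_nhdsLT hdt] with r hr
    simp [z, hr.1.not_gt, hr.2]
  exact ⟨z, ⟨hy.piecewise_Iio ((IsCadlagOnR.const T x).piecewise_Iio hy t) d, hbz⟩,
    leftLim_eq_of_tendsto (tendsto_const_nhds.congr' hzx.symm)⟩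

lemma setOf_le_coe_subset_closure_setOf_lt_coe (a : EReal) :
    {x : ℝ | a ≤ x} ⊆ closure {x : ℝ | a < x} := by
  intro x hx
  have hIoi : Ioi x ⊆ {z : ℝ | a < z} := fun z hz => hx.trans_lt (EReal.coe_lt_coe hz)
  exact closure_mono hIoi (closure_Ioi x ▸ self_mem_Ici)

theorem statement16_general (hne : (cadlagSelections T b).Nonempty) (ht : t ∈ Ioc 0 T) :
    closure ((fun y => Function.leftLim y t) '' cadlagSelections T b) =
      {x : ℝ | lregE b t ≤ x} := by
  apply Subset.antisymm
  · have hclosed : IsClosed {x : ℝ | lregE b t ≤ x} :=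
      isClosed_Ici.preimage continuous_coe_real_ereal
    exact closure_minimal (image_subset_iff.2 fun _ hy => lregE_le_leftLim hy ht) hclosed
  · exact (setOf_le_coe_subset_closure_setOf_lt_coe _).trans
      (closure_mono fun _ => exists_cadlagSelection_leftLim_eq hne)

/-- **Left limits of the càdlàg selections of an epigraphical constraint** (from
Example 8.1): for a right-usc `b` dominated by a càdlàg function, with
`D(S) = {y ∈ D | y ≥ b}`, one has `cl{y_{t-} | y ∈ D(S)} = {x | x ≥ ⃗b_t}` for every
`t ∈ (0,T]`. -/
theorem statement16 (T : ℝ) (hT : 0 < T) (b : ℝ → ℝ)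
    (husc : ∀ t ∈ Set.Ico (0:ℝ) T,
      Filter.limsup (fun s => (b s : EReal)) (𝓝[>] t) ≤ (b t : EReal))
    (ycheck : ℝ → ℝ) (hycheck : IsCadlagOnR T ycheck)
    (hdom : ∀ t ∈ Set.Icc (0:ℝ) T, b t ≤ ycheck t) :
    ∀ t ∈ Set.Ioc (0:ℝ) T,
      closure {x : ℝ | ∃ y : ℝ → ℝ,
        (IsCadlagOnR T y ∧ ∀ r ∈ Set.Icc (0:ℝ) T, b r ≤ y r) ∧ Function.leftLim y t = x} =
      {x : ℝ | lregE b t ≤ (x : EReal)} := by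
  exact fun t ht => statement16_general ⟨ycheck, hycheck, hdom⟩ ht
end

section
/- Let T > 0 be finite and Γ : [0,T] ⇒ ℝ^d a closed convex-valued, right-inner semicontinuous mapping such that int Γ_t ≠ ∅ for all t ∈ [0,T] and int ⃗Γ_t ≠ ∅ for all t ∈ (0,T]. Then Γ admits a càdlàg selection: there exists a càdlàg function y : [0,T] → ℝ^d with y_t ∈ Γ_t for all t ∈ [0,T]. -/
open MeasureTheory Filter Set Topology
open scoped ENNReal Classical

/-- A sequence in `[0,T]` decreasing strictly to `t` from the right. -/
def SeqToRight (T t : ℝ) (s : ℕ → ℝ) : Prop :=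
  StrictAnti s ∧ (∀ n, t < s n ∧ s n ≤ T) ∧ Tendsto s atTop (𝓝 t)

/-- `limsup_{s↑↑t} Γ_s`: the points `x` which are limits of points `x_n ∈ Γ_{s_n}` along
some strictly increasing sequence `s_n → t`. -/
def leftLimsupSV {d : ℕ} (Γ : ℝ → Set (Euc d)) (t : ℝ) : Set (Euc d) :=
  {x | ∃ s : ℕ → ℝ, SeqToLeft t s ∧
    ∃ xn : ℕ → Euc d, (∀ n, xn n ∈ Γ (s n)) ∧ Tendsto xn atTop (𝓝 x)}

/-- `liminf_{s↓↓t} Γ_s`. -/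
def rightLiminfSV {d : ℕ} (T : ℝ) (Γ : ℝ → Set (Euc d)) (t : ℝ) : Set (Euc d) :=
  {x | ∀ s : ℕ → ℝ, SeqToRight T t s →
    Tendsto (fun n => Metric.infDist x (Γ (s n))) atTop (𝓝 0)}

/-- `limsup_{s↓↓t} Γ_s`. -/
def rightLimsupSV {d : ℕ} (T : ℝ) (Γ : ℝ → Set (Euc d)) (t : ℝ) : Set (Euc d) :=
  {x | ∃ s : ℕ → ℝ, SeqToRight T t s ∧
    ∃ xn : ℕ → Euc d, (∀ n, xn n ∈ Γ (s n)) ∧ Tendsto xn atTop (𝓝 x)}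

/-- `Γ` is right-inner semicontinuous on `[0,T]`: the preimage of every open set is open
in the topology `τ_r` generated by the right-open intervals (stated via the basic open
balls). -/
def RightIscSV (T : ℝ) {d : ℕ} (Γ : ℝ → Set (Euc d)) : Prop :=
  ∀ t ∈ Set.Icc (0:ℝ) T, ∀ x ∈ Γ t, ∀ ε > (0:ℝ), ∃ δ > (0:ℝ),
    ∀ s ∈ Set.Icc (0:ℝ) T, t ≤ s → s < t + δ → ∃ x' ∈ Γ s, dist x' x < ε

/-- `Γ` is left-inner semicontinuous on `[0,T]`. -/
def LeftIscSV (T : ℝ) {d : ℕ} (Γ : ℝ → Set (Euc d)) : Prop :=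
  ∀ t ∈ Set.Icc (0:ℝ) T, ∀ x ∈ Γ t, ∀ ε > (0:ℝ), ∃ δ > (0:ℝ),
    ∀ s ∈ Set.Icc (0:ℝ) T, s ≤ t → t - δ < s → ∃ x' ∈ Γ s, dist x' x < ε

/-- `Γ` is right-outer semicontinuous on `[0,T]`: its graph is closed in the product of
`τ_r` and the Euclidean topology (stated sequentially). -/
def RightOscSV (T : ℝ) {d : ℕ} (Γ : ℝ → Set (Euc d)) : Prop :=
  ∀ t ∈ Set.Icc (0:ℝ) T, ∀ (s : ℕ → ℝ) (xn : ℕ → Euc d) (x : Euc d),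
    (∀ n, s n ∈ Set.Icc (0:ℝ) T ∧ t ≤ s n) → Tendsto s atTop (𝓝 t) →
    (∀ n, xn n ∈ Γ (s n)) → Tendsto xn atTop (𝓝 x) → x ∈ Γ t

/-- `Γ` is left-outer semicontinuous on `[0,T]`. -/
def LeftOscSV (T : ℝ) {d : ℕ} (Γ : ℝ → Set (Euc d)) : Prop :=
  ∀ t ∈ Set.Icc (0:ℝ) T, ∀ (s : ℕ → ℝ) (xn : ℕ → Euc d) (x : Euc d),
    (∀ n, s n ∈ Set.Icc (0:ℝ) T ∧ s n ≤ t) → Tendsto s atTop (𝓝 t) →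
    (∀ n, xn n ∈ Γ (s n)) → Tendsto xn atTop (𝓝 x) → x ∈ Γ t

/-- `Γ` has limits from the left on `(0,T]`. -/
def LagSV (T : ℝ) {d : ℕ} (Γ : ℝ → Set (Euc d)) : Prop :=
  ∀ t ∈ Set.Ioc (0:ℝ) T, leftLiminfSV Γ t = leftLimsupSV Γ t

/-- `Γ` has limits from the right on `[0,T)`. -/
def LadSV (T : ℝ) {d : ℕ} (Γ : ℝ → Set (Euc d)) : Prop :=
  ∀ t ∈ Set.Ico (0:ℝ) T, rightLiminfSV T Γ t = rightLimsupSV T Γ t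

/-- A càdlàg set-valued mapping: right-continuous (right-isc and right-osc) with limits
from the left. -/
def CadlagSV (T : ℝ) {d : ℕ} (Γ : ℝ → Set (Euc d)) : Prop :=
  RightIscSV T Γ ∧ RightOscSV T Γ ∧ LagSV T Γ

/-- A càglàd set-valued mapping: left-continuous (left-isc and left-osc) with limits
from the right. -/
def CagladSV (T : ℝ) {d : ℕ} (Γ : ℝ → Set (Euc d)) : Prop :=
  LeftIscSV T Γ ∧ LeftOscSV T Γ ∧ LadSV T Γ

/-- A function `[0,T] → ℝ^d` (modelled on `ℝ`) is càdlàg: right-continuous on `[0,T)`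
with left limits on `(0,T]`. -/
def IsCadlagOn (T : ℝ) {d : ℕ} (y : ℝ → Euc d) : Prop :=
  (∀ t ∈ Set.Ico (0:ℝ) T, Tendsto y (𝓝[>] t) (𝓝 (y t))) ∧
  (∀ t ∈ Set.Ioc (0:ℝ) T, ∃ l, Tendsto y (𝓝[<] t) (𝓝 l))

/-- The left-limit evaluation `y_{t-}`, with the convention `y_{0-} := 0`. -/
noncomputable def lmod {d : ℕ} (y : ℝ → Euc d) (t : ℝ) : Euc d :=
  if t ≤ 0 then 0 else Function.leftLim y t

/-!
If a convex set approximates every point of a ball to within the radius of that ball, then its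
closure contains the centre (a separating functional would gain the whole radius). Since compact
sets are approximated uniformly, a point interior to the inner limit of convex sets with nonempty
interior therefore lies in all sufficiently late sets. Applied to the one-sided limits at `c`,
this shows that `Γ` has a constant selection on some `[c, v)` and on some `(u, c)`. Such constant
pieces are glued by continuous induction on `[0, T]`; the induction runs over half-open intervals
`[0, t)` because the constant found to the left of `c` need not belong to `Γ c`.
-/

section InnerLimit

variable {ι α : Type*} [PseudoMetricSpace α]

/-- The inner limit (Painlevé–Kuratowski `liminf`) of a family of sets along a filter: the points
whose distance to `Γ i` tends to `0`. Phrasing this with thickenings rather than with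
`Metric.infDist`, which is `0` for the empty set, keeps indices with `Γ i = ∅` from counting as
close to every point. -/
def innerLimit (l : Filter ι) (Γ : ι → Set α) : Set α :=
  {x | ∀ ε > 0, ∀ᶠ i in l, x ∈ Metric.thickening ε (Γ i)}

theorem eventually_subset_thickening_of_isCompact {l : Filter ι} {Γ : ι → Set α} {K : Set α}
    (hK : IsCompact K) (hKΓ : K ⊆ innerLimit l Γ) {ε : ℝ} (hε : 0 < ε) :
    ∀ᶠ i in l, K ⊆ Metric.thickening ε (Γ i) := by
  obtain ⟨F, hFK, hF, hcover⟩ := hK.finite_cover_balls (half_pos hε)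
  have hFΓ : ∀ᶠ i in l, F ⊆ Metric.thickening (ε / 2) (Γ i) :=
    hF.eventually_all.2 fun a ha => hKΓ (hFK ha) _ (half_pos hε)
  filter_upwards [hFΓ] with i hi
  calc K ⊆ Metric.thickening (ε / 2) F := by rwa [Metric.thickening_eq_biUnion_ball]
    _ ⊆ Metric.thickening (ε / 2) (Metric.thickening (ε / 2) (Γ i)) :=
      Metric.thickening_subset_of_subset _ hi
    _ ⊆ Metric.thickening (ε / 2 + ε / 2) (Γ i) := Metric.thickening_thickening_subset _ _ _
    _ = Metric.thickening ε (Γ i) := by rw [add_halves]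

end InnerLimit

section Convex

variable {ι E : Type*} [NormedAddCommGroup E] [NormedSpace ℝ E]

theorem mem_closure_of_ball_subset_thickening {K : Set E} (hK : Convex ℝ K) {x : E} {r : ℝ}
    (hr : 0 < r) (h : Metric.ball x r ⊆ Metric.thickening r K) : x ∈ closure K := by
  by_contra hx
  obtain ⟨f, u, hfK, hfx⟩ := geometric_hahn_banach_closed_point hK.closure isClosed_closure hx
  obtain ⟨w, hw, hfw⟩ : ∃ w, ‖w‖ < 1 ∧ ‖f‖ - (f x - u) / r < f w := by
    obtain ⟨w, hw, hfw⟩ := f.exists_lt_apply_of_lt_opNorm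
      (sub_lt_self ‖f‖ (div_pos (sub_pos.2 hfx) hr))
    rcases lt_abs.1 hfw with hpos | hneg
    · exact ⟨w, hw, hpos⟩
    · exact ⟨-w, by rwa [norm_neg], by rwa [map_neg]⟩
  have hball : x + r • w ∈ Metric.ball x r := by
    rw [mem_ball_iff_norm, add_sub_cancel_left, norm_smul, Real.norm_of_nonneg hr.le]
    exact mul_lt_of_lt_one_right hr hw
  obtain ⟨a, ha, hdist⟩ := Metric.mem_thickening_iff.1 (h hball)
  have hupper : f (x + r • w) < u + ‖f‖ * r := by
    calc f (x + r • w) = f a + f (x + r • w - a) := by rw [← map_add, add_sub_cancel]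
      _ < u + f (x + r • w - a) := by gcongr; exact hfK a (subset_closure ha)
      _ ≤ u + ‖f‖ * ‖x + r • w - a‖ := by gcongr; exact (le_abs_self _).trans (f.le_opNorm _)
      _ ≤ u + ‖f‖ * r := by gcongr; exact (dist_eq_norm (x + r • w) a ▸ hdist).le
  have hlower : u + ‖f‖ * r < f (x + r • w) := by
    calc u + ‖f‖ * r = f x + r * (‖f‖ - (f x - u) / r) := by field_simp; ring
      _ < f x + r * f w := by gcongr
      _ = f (x + r • w) := by rw [map_add, map_smul, smul_eq_mul]
  exact lt_asymm hupper hlower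

theorem mem_interior_closure_of_ball_subset_thickening {K : Set E} (hK : Convex ℝ K) {x : E}
    {δ r : ℝ} (hδ : 0 < δ) (hδr : δ < r) (h : Metric.ball x r ⊆ Metric.thickening δ K) :
    x ∈ interior (closure K) := by
  refine mem_interior_iff_mem_nhds.2 (Filter.mem_of_superset
    (Metric.ball_mem_nhds x (sub_pos.2 hδr)) fun y hy => ?_)
  refine mem_closure_of_ball_subset_thickening hK hδ ((Metric.ball_subset_ball' ?_).trans h)
  linarith [Metric.mem_ball.1 hy]

theorem eventually_mem_interior_of_mem_interior_innerLimit [ProperSpace E] {l : Filter ι}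
    {Γ : ι → Set E} (hconv : ∀ᶠ i in l, Convex ℝ (Γ i))
    (hsolid : ∀ᶠ i in l, (interior (Γ i)).Nonempty) {x : E} (hx : x ∈ interior (innerLimit l Γ)) :
    ∀ᶠ i in l, x ∈ interior (Γ i) := by
  obtain ⟨r, hr, hball⟩ :=
    Metric.nhds_basis_closedBall.mem_iff.1 (mem_interior_iff_mem_nhds.1 hx)
  filter_upwards [hconv, hsolid, eventually_subset_thickening_of_isCompact
    (isCompact_closedBall x r) hball (half_pos hr)] with i hconv hsolid happrox
  rw [← hconv.interior_closure_eq_interior_of_nonempty_interior hsolid]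
  exact mem_interior_closure_of_ball_subset_thickening hconv (half_pos hr) (half_lt_self hr)
    (Metric.ball_subset_closedBall.trans happrox)

end Convex

theorem exists_seq_strictMono_tendsto_of_frequently_nhdsLT {α : Type*} [LinearOrder α]
    [TopologicalSpace α] [OrderTopology α] {t : α} [(𝓝 t).IsCountablyGenerated] {p : α → Prop}
    (h : ∃ᶠ s in 𝓝[<] t, p s) :
    ∃ u : ℕ → α, StrictMono u ∧ (∀ n, u n < t) ∧ Tendsto u atTop (𝓝 t) ∧ ∀ n, p (u n) := by
  have hfreq : ∃ᶠ s in 𝓝[<] t, s ∈ {s | s < t ∧ p s} :=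
    (h.and_eventually self_mem_nhdsWithin).mono fun _ hs => hs.symm
  have hlub : IsLUB {s | s < t ∧ p s} t :=
    isLUB_of_mem_closure (fun _ hs => hs.1.le) (hfreq.filter_mono nhdsWithin_le_nhds).mem_closure
  obtain ⟨u, hmono, hlt, htendsto, hu⟩ :=
    hlub.exists_seq_strictMono_tendsto_of_notMem (fun ht => ht.1.false) hfreq.exists
  exact ⟨u, hmono, hlt, htendsto, fun n => (hu n).2⟩

section Selection

variable {d : ℕ} {Γ : ℝ → Set (Euc d)} {T t u v : ℝ}

theorem leftLiminfSV_subset_innerLimit (ht : 0 < t) (hne : ∀ s ∈ Ico 0 t, (Γ s).Nonempty) :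
    leftLiminfSV Γ t ⊆ innerLimit (𝓝[<] t) Γ := by
  intro x hx ε hε
  by_contra hfar
  obtain ⟨s, hmono, hlt, htendsto, hs⟩ := exists_seq_strictMono_tendsto_of_frequently_nhdsLT
    ((not_eventually.1 hfar).and_eventually (nhdsWithin_le_nhds (Ioi_mem_nhds ht)))
  have hmem : ∀ n, s n ∈ Ico 0 t := fun n => ⟨(hs n).2.le, hlt n⟩
  obtain ⟨n, hn⟩ := ((hx s ⟨hmono, hmem, htendsto⟩).eventually_lt_const hε).exists
  obtain ⟨y, hy, hdist⟩ := (Metric.infDist_lt_iff (hne _ (hmem n))).1 hn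
  exact (hs n).1 (Metric.mem_thickening_iff.2 ⟨y, hy, hdist⟩)

theorem RightIscSV.subset_innerLimit (hΓ : RightIscSV T Γ) (ht : t ∈ Icc 0 T) :
    Γ t ⊆ innerLimit (𝓝[Icc t T] t) Γ := by
  intro x hx ε hε
  obtain ⟨δ, hδ, happrox⟩ := hΓ t ht x hx ε hε
  have hnear : ∀ᶠ s in 𝓝[Icc t T] t, s < t + δ :=
    nhdsWithin_le_nhds (Iio_mem_nhds (lt_add_of_pos_right t hδ))
  filter_upwards [self_mem_nhdsWithin, hnear] with s hs hsδ
  obtain ⟨y, hy, hdist⟩ := happrox s ⟨ht.1.trans hs.1, hs.2⟩ hs.1 hsδ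
  exact Metric.mem_thickening_iff.2 ⟨y, hy, dist_comm x y ▸ hdist⟩

theorem exists_eventually_mem_nhdsWithin_Icc
    (hconv : ∀ s ∈ Icc 0 T, Convex ℝ (Γ s)) (hisc : RightIscSV T Γ)
    (hsolid : ∀ s ∈ Icc 0 T, (interior (Γ s)).Nonempty) (ht : t ∈ Icc 0 T) :
    ∃ z, ∀ᶠ s in 𝓝[Icc t T] t, z ∈ Γ s := by
  have hdom : ∀ᶠ s in 𝓝[Icc t T] t, s ∈ Icc 0 T :=
    mem_of_superset self_mem_nhdsWithin (Icc_subset_Icc_left ht.1)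
  obtain ⟨z, hz⟩ := hsolid t ht
  exact ⟨z, (eventually_mem_interior_of_mem_interior_innerLimit (hdom.mono hconv)
    (hdom.mono hsolid) (interior_mono (hisc.subset_innerLimit ht) hz)).mono
    fun _ hs => interior_subset hs⟩

theorem exists_eventually_mem_nhdsLT (ht : 0 < t) (hconv : ∀ s ∈ Ico 0 t, Convex ℝ (Γ s))
    (hsolid : ∀ s ∈ Ico 0 t, (interior (Γ s)).Nonempty)
    (hsolidLeft : (interior (leftLiminfSV Γ t)).Nonempty) :
    ∃ z, ∀ᶠ s in 𝓝[<] t, z ∈ Γ s := by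
  have hdom : ∀ᶠ s in 𝓝[<] t, s ∈ Ico 0 t := Ico_mem_nhdsLT ht
  have hsub : leftLiminfSV Γ t ⊆ innerLimit (𝓝[<] t) Γ :=
    leftLiminfSV_subset_innerLimit ht fun s hs => (hsolid s hs).mono interior_subset
  obtain ⟨z, hz⟩ := hsolidLeft
  exact ⟨z, (eventually_mem_interior_of_mem_interior_innerLimit (hdom.mono hconv)
    (hdom.mono hsolid) (interior_mono hsub hz)).mono fun _ hs => interior_subset hs⟩

theorem isCadlagOn_const (z : Euc d) : IsCadlagOn T fun _ => z :=
  ⟨fun _ _ => tendsto_const_nhds, fun _ _ => ⟨z, tendsto_const_nhds⟩⟩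

theorem IsCadlagOn.ite_lt {y z : ℝ → Euc d} (hy : IsCadlagOn u y) (hz : IsCadlagOn v z) :
    IsCadlagOn v fun s => if s < u then y s else z s := by
  refine ⟨fun t ht => ?_, fun t ht => ?_⟩
  · rcases lt_or_ge t u with htu | hut
    · simp only [if_pos htu]
      refine (hy.1 t ⟨ht.1, htu⟩).congr' ?_
      filter_upwards [Ioo_mem_nhdsGT htu] with s hs using (if_pos hs.2).symm
    · simp only [if_neg hut.not_gt]
      refine (hz.1 t ht).congr' ?_
      filter_upwards [self_mem_nhdsWithin] with s hs using (if_neg (hut.trans_lt hs).not_gt).symm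
  · rcases le_or_gt t u with htu | hut
    · obtain ⟨a, ha⟩ := hy.2 t ⟨ht.1, htu⟩
      refine ⟨a, ha.congr' ?_⟩
      filter_upwards [self_mem_nhdsWithin] with s hs using (if_pos (hs.trans_le htu)).symm
    · obtain ⟨a, ha⟩ := hz.2 t ht
      refine ⟨a, ha.congr' ?_⟩
      filter_upwards [Ioo_mem_nhdsLT hut] with s hs using (if_neg hs.1.not_gt).symm

/-- `Γ` has a càdlàg selection on the half-open interval `[0, t)`. The selection has a left limit
at `t`, but its value there is not constrained. -/
def HasCadlagSelectionIco (Γ : ℝ → Set (Euc d)) (t : ℝ) : Prop :=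
  ∃ y, IsCadlagOn t y ∧ ∀ s ∈ Ico 0 t, y s ∈ Γ s

theorem hasCadlagSelectionIco_zero : HasCadlagSelectionIco Γ 0 :=
  ⟨fun _ => 0, isCadlagOn_const 0, fun _ hs => absurd hs.1 hs.2.not_ge⟩

theorem HasCadlagSelectionIco.extend (h : HasCadlagSelectionIco Γ u) {z : Euc d}
    (hz : ∀ s ∈ Ico u v, z ∈ Γ s) : HasCadlagSelectionIco Γ v := by
  obtain ⟨y, hy, hyΓ⟩ := h
  refine ⟨_, hy.ite_lt (isCadlagOn_const z), fun s hs => ?_⟩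
  split_ifs with hsu
  · exact hyΓ s ⟨hs.1, hsu⟩
  · exact hz s ⟨not_lt.1 hsu, hs.2⟩

theorem isClosed_setOf_hasCadlagSelectionIco_inter_Icc
    (hleft : ∀ t ∈ Ioc 0 T, ∃ z, ∀ᶠ s in 𝓝[<] t, z ∈ Γ s) :
    IsClosed ({t | HasCadlagSelectionIco Γ t} ∩ Icc 0 T) := by
  refine isClosed_iff_frequently.2 fun t hfreq => ?_
  have ht : t ∈ Icc 0 T :=
    isClosed_Icc.mem_of_frequently_of_tendsto (hfreq.mono fun _ hs => hs.2) tendsto_id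
  refine ⟨?_, ht⟩
  rcases ht.1.eq_or_lt with rfl | ht0
  · exact hasCadlagSelectionIco_zero
  obtain ⟨z, hz⟩ := hleft t ⟨ht0, ht.2⟩
  obtain ⟨a, hat, ha⟩ := mem_nhdsLT_iff_exists_Ioo_subset.1 hz
  obtain ⟨u, hu, hau⟩ := (hfreq.and_eventually (Ioi_mem_nhds hat)).exists
  exact hu.1.extend fun s hs => ha ⟨hau.trans_le hs.1, hs.2⟩

theorem hasCadlagSelectionIco_of_eventually_mem (hT : 0 ≤ T)
    (hright : ∀ t ∈ Ico 0 T, ∃ z, ∀ᶠ s in 𝓝[≥] t, z ∈ Γ s)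
    (hleft : ∀ t ∈ Ioc 0 T, ∃ z, ∀ᶠ s in 𝓝[<] t, z ∈ Γ s) : HasCadlagSelectionIco Γ T := by
  refine (isClosed_setOf_hasCadlagSelectionIco_inter_Icc hleft).mem_of_ge_of_forall_exists_gt
    hasCadlagSelectionIco_zero hT fun t ⟨hsel, ht⟩ => ?_
  obtain ⟨z, hz⟩ := hright t ht
  obtain ⟨v, hv, hvΓ⟩ := (mem_nhdsGE_iff_exists_mem_Ioc_Ico_subset ht.2).1 hz
  exact ⟨v, hsel.extend hvΓ, hv⟩

theorem HasCadlagSelectionIco.exists_selection_Icc (h : HasCadlagSelectionIco Γ T)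
    (hne : (Γ T).Nonempty) : ∃ y, IsCadlagOn T y ∧ ∀ t ∈ Icc 0 T, y t ∈ Γ t := by
  obtain ⟨y, hy, hyΓ⟩ := h
  obtain ⟨z, hz⟩ := hne
  refine ⟨_, hy.ite_lt (isCadlagOn_const z), fun t ht => ?_⟩
  split_ifs with htT
  · exact hyΓ t ⟨ht.1, htT⟩
  · rwa [ht.2.antisymm (not_lt.1 htT)]

end Selection

theorem statement19_general {d : ℕ} {T : ℝ} (hT : 0 ≤ T) {Γ : ℝ → Set (Euc d)}
    (hconv : ∀ t ∈ Icc 0 T, Convex ℝ (Γ t)) (hisc : RightIscSV T Γ)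
    (hsolid : ∀ t ∈ Icc 0 T, (interior (Γ t)).Nonempty)
    (hsolidvec : ∀ t ∈ Ioc 0 T, (interior (vecSV Γ t)).Nonempty) :
    ∃ y : ℝ → Euc d, IsCadlagOn T y ∧ ∀ t ∈ Icc 0 T, y t ∈ Γ t := by
  have hright : ∀ t ∈ Ico 0 T, ∃ z, ∀ᶠ s in 𝓝[≥] t, z ∈ Γ s := fun t ht => by
    rw [← nhdsWithin_Icc_eq_nhdsGE ht.2]
    exact exists_eventually_mem_nhdsWithin_Icc hconv hisc hsolid (Ico_subset_Icc_self ht)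
  have hleft : ∀ t ∈ Ioc 0 T, ∃ z, ∀ᶠ s in 𝓝[<] t, z ∈ Γ s := fun t ht => by
    have hsub : Ico 0 t ⊆ Icc 0 T := Ico_subset_Icc_self.trans (Icc_subset_Icc_right ht.2)
    have hvec := hsolidvec t ht
    rw [vecSV, if_neg ht.1.not_ge] at hvec
    exact exists_eventually_mem_nhdsLT ht.1 (fun s hs => hconv s (hsub hs))
      (fun s hs => hsolid s (hsub hs)) hvec
  exact (hasCadlagSelectionIco_of_eventually_mem hT hright hleft).exists_selection_Icc
    ((hsolid T (right_mem_Icc.2 hT)).mono interior_subset)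

/-- **Existence of a càdlàg selection** (from the proof of Theorem 7.2): a closed
convex-valued, right-inner semicontinuous mapping `Γ` with `int Γ_t ≠ ∅` on `[0,T]` and
`int ⃗Γ_t ≠ ∅` on `(0,T]` admits a càdlàg selection. -/
theorem statement19 {d : ℕ} (T : ℝ) (hT : 0 < T) (Γ : ℝ → Set (Euc d))
    (hval : ∀ t ∈ Set.Icc (0:ℝ) T, IsClosed (Γ t) ∧ Convex ℝ (Γ t))
    (hisc : RightIscSV T Γ)
    (hsolid : ∀ t ∈ Set.Icc (0:ℝ) T, (interior (Γ t)).Nonempty)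
    (hsolidvec : ∀ t ∈ Set.Ioc (0:ℝ) T, (interior (vecSV Γ t)).Nonempty) :
    ∃ y : ℝ → Euc d, IsCadlagOn T y ∧ ∀ t ∈ Set.Icc (0:ℝ) T, y t ∈ Γ t :=
  statement19_general hT.le (fun t ht => (hval t ht).2) hisc hsolid hsolidvec
end
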